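/- If the principle (*) holds, then there exist a stationary set S⊆S^{ω₂}_ω, an ordinal γ<ω₁, and a coloring f:[ω₂]²→ω₂ such that otp(t_{ηα})≤γ for every α∈S and every η<α, and yet no closed subset C⊆S of order type ω₁ is f-rainbow. -/

import Mathlib

open Set Cardinal Ordinal

universe u

/-- `A` has order type `θ`: there is an order isomorphism from `Iio θ` onto `A`. -/
def HasOType (A : Set Ordinal.{u}) (θ : Ordinal.{u}) : Prop :=
  Nonempty (Set.Iio θ ≃o A)

/-- The order type of `A` is at most `γ`: `A` order-embeds into `Iio γ`. -/
def OTypeLE (A : Set Ordinal.{u}) (γ : Ordinal.{u}) : Prop :=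
  Nonempty (A ↪o Set.Iio γ)

/-- `A` is `f`-rainbow: `f` is injective on increasing pairs from `A`. -/
def IsRainbow (f : Ordinal → Ordinal → Ordinal) (A : Set Ordinal) : Prop :=
  ∀ α ∈ A, ∀ β ∈ A, ∀ γ ∈ A, ∀ δ ∈ A,
    α < β → γ < δ → f α β = f γ δ → α = γ ∧ β = δ

/-- `f` is a normal coloring on pairs below `κ`: equal colors force equal top points. -/
def IsNormalColoring (f : Ordinal → Ordinal → Ordinal) (κ : Ordinal) : Prop :=
  ∀ α β γ δ : Ordinal, α < β → β < κ → γ < δ → δ < κ → f α β = f γ δ → β = δ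

/-- `f` is 2-bounded: every fiber of `f` on pairs below `κ` has at most two elements. -/
def TwoBounded (f : Ordinal → Ordinal → Ordinal) (κ : Ordinal) : Prop :=
  ∀ ξ : Ordinal, {p : Ordinal × Ordinal | p.1 < p.2 ∧ p.2 < κ ∧ f p.1 p.2 = ξ}.encard ≤ 2

/-- `f` is `<ω`-bounded: every fiber of `f` on pairs below `κ` is finite. -/
def FinBounded (f : Ordinal → Ordinal → Ordinal) (κ : Ordinal) : Prop :=
  ∀ ξ : Ordinal, {p : Ordinal × Ordinal | p.1 < p.2 ∧ p.2 < κ ∧ f p.1 p.2 = ξ}.Finite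

/-- `f` is `ω`-bounded: every fiber of `f` on pairs below `κ` is countable. -/
def OmegaBounded (f : Ordinal → Ordinal → Ordinal) (κ : Ordinal) : Prop :=
  ∀ ξ : Ordinal, {p : Ordinal × Ordinal | p.1 < p.2 ∧ p.2 < κ ∧ f p.1 p.2 = ξ}.Countable

/-- `A` is a closed set of ordinals: any nonzero `α` below `sup A` which is the
supremum of the elements of `A` below it belongs to `A`. -/
def IsClosedSet (A : Set Ordinal) : Prop :=
  ∀ α : Ordinal, α < sSup A → α ≠ 0 → sSup (A ∩ Set.Iio α) = α → α ∈ A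

/-- `C` is club in `δ`: a subset of `δ`, unbounded in `δ`, and closed below `δ`. -/
def IsClubIn (C : Set Ordinal) (δ : Ordinal) : Prop :=
  C ⊆ Set.Iio δ ∧ (∀ α < δ, ∃ β ∈ C, α ≤ β) ∧
  ∀ α : Ordinal, α < δ → α ≠ 0 → sSup (C ∩ Set.Iio α) = α → α ∈ C

/-- `A` is stationary in `δ`: it meets every club in `δ`. -/
def IsStationaryIn (A : Set Ordinal) (δ : Ordinal) : Prop :=
  ∀ C : Set Ordinal, IsClubIn C δ → (A ∩ C).Nonempty

/-- `f` is `<bd`-type bounded on pairs below `κ`: some `γ < bd` bounds the order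
type of every color class `t_{ηβ} = {ξ < β | f ξ β = f η β}`. -/
def TypeBounded (f : Ordinal → Ordinal → Ordinal) (κ bd : Ordinal) : Prop :=
  ∃ γ < bd, ∀ η β : Ordinal, η < β → β < κ →
    OTypeLE {ξ : Ordinal | ξ < β ∧ f ξ β = f η β} γ

/-- `f` is `<bd`-type bounded relative to the set `A`. -/
def TypeBoundedOn (f : Ordinal → Ordinal → Ordinal) (A : Set Ordinal) (bd : Ordinal) : Prop :=
  ∃ γ < bd, ∀ η ∈ A, ∀ β ∈ A, η < β →
    OTypeLE {ξ : Ordinal | ξ ∈ A ∧ ξ < β ∧ f ξ β = f η β} γ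

/-- The principle `(*)`: there is a sequence `⟨S_α : α ∈ S^{ω₂}_ω⟩` of countable
`S_α ⊆ α` such that for every `β ∈ S^{ω₂}_{ω₁}` there is a club `c ⊆ β` of ordinals of
countable cofinality with `c ∩ α ⊆ S_α` for every `α ∈ c`. -/
def StarPrinciple : Prop :=
  ∃ S : Ordinal.{0} → Set Ordinal.{0},
    (∀ α : Ordinal, α < (Cardinal.aleph 2).ord → α.cof = ℵ₀ →
      S α ⊆ Set.Iio α ∧ (S α).Countable) ∧
    ∀ β : Ordinal, β < (Cardinal.aleph 2).ord → β.cof = Cardinal.aleph 1 →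
      ∃ c : Set Ordinal, IsClubIn c β ∧ (∀ α ∈ c, α.cof = ℵ₀) ∧
        ∀ α ∈ c, c ∩ Set.Iio α ⊆ S α

/-!
Fix a sequence `S` as in `(*)` and give the pair `ξ < α` the color `0` if `ξ ∈ S α`, and a nonzero
color depending injectively on `ξ` otherwise. Below `α` the color classes are then singletons or
contained in `S α`. The countable order type of `S α` is bounded by one `γ < ω₁` for stationarily
many `α` of cofinality `ω`, because a union of `ℵ₁` nonstationary sets is nonstationary. A closed
set `C` of order type `ω₁` is club in `β = sup C`, so `C ∩ c_β` is club in `β` as well; for points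
`x < y < z` of it both `x` and `y` lie in `S z`, so `(x, z)` and `(y, z)` have the same color.

`(*)` speaks of ordinals in the lowest universe, so the sequence and the colors are transported
along `Ordinal.lift` to the universes of the points and of the colors.
-/

universe v w

section Club

theorem sSup_inter_Iio_eq_iff {C : Set Ordinal.{u}} {α : Ordinal.{u}} :
    sSup (C ∩ Iio α) = α ↔ ∀ x < α, ∃ y ∈ C, x < y ∧ y < α := by
  refine ⟨fun h x hx => ?_, fun h => le_antisymm (csSup_le' fun y hy => hy.2.le) ?_⟩
  · obtain ⟨y, ⟨hyC, hyα⟩, hxy⟩ := exists_lt_of_lt_csSup' (h.symm ▸ hx)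
    exact ⟨y, hyC, hxy, hyα⟩
  · refine le_of_forall_lt fun x hx => ?_
    obtain ⟨y, hyC, hxy, hyα⟩ := h x hx
    exact hxy.trans_le (le_csSup ⟨α, fun z hz => hz.2.le⟩ ⟨hyC, hyα⟩)

theorem isClubIn_iff_isClub {C : Set Ordinal.{u}} {δ : Ordinal.{u}} :
    IsClubIn C δ ↔ C ⊆ Iio δ ∧ IsClub ((↑) ⁻¹' C : Set (Iio δ)) := by
  constructor
  · rintro ⟨hsub, hunb, hcl⟩
    refine ⟨hsub, fun t ht ⟨y, hy⟩ _ x hx => ?_, fun x => ?_⟩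
    · by_contra hxC
      have hlt : ∀ z ∈ t, z < x := fun z hz => (hx.1 hz).lt_of_ne fun h => hxC (h ▸ ht hz)
      have hx0 : (x : Ordinal) ≠ 0 := (bot_le.trans_lt (Subtype.coe_lt_coe.2 (hlt y hy))).ne'
      refine hxC (hcl x x.2 hx0 (sSup_inter_Iio_eq_iff.2 fun a ha => ?_))
      obtain ⟨z, hz, haz⟩ := (lt_isLUB_iff hx (b := ⟨a, ha.trans x.2⟩)).1 ha
      exact ⟨z, ht hz, haz, hlt z hz⟩
    · obtain ⟨y, hy, hxy⟩ := hunb x x.2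
      exact ⟨⟨y, hsub hy⟩, hy, hxy⟩
  · rintro ⟨hsub, hclub⟩
    refine ⟨hsub, fun α hα => ?_, fun α hα hα0 hsup => ?_⟩
    · obtain ⟨y, hy, hαy⟩ := hclub.isCofinal ⟨α, hα⟩
      exact ⟨y, hy, hαy⟩
    · rw [sSup_inter_Iio_eq_iff] at hsup
      obtain ⟨y, hyC, -, hyα⟩ := hsup 0 (bot_lt_iff_ne_bot.2 hα0)
      refine hclub.isLUB_mem (t := {z | ↑z ∈ C ∧ z < ⟨α, hα⟩}) (x := ⟨α, hα⟩)
        (fun z hz => hz.1) ⟨⟨y, hyα.trans hα⟩, hyC, hyα⟩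
        ⟨fun z hz => hz.2.le, fun b hb => le_of_not_gt fun hbα => ?_⟩
      obtain ⟨z, hzC, hbz, hzα⟩ := hsup b hbα
      exact hbz.not_ge (hb (a := ⟨z, hzα.trans hα⟩) ⟨hzC, hzα⟩)

theorem isStationaryIn_iff_isStationary {A : Set Ordinal.{u}} {δ : Ordinal.{u}} :
    IsStationaryIn A δ ↔ IsStationary ((↑) ⁻¹' A : Set (Iio δ)) := by
  refine ⟨fun hA C hC => ?_, fun hA C hC => ?_⟩
  · obtain ⟨_, hxA, x, hxC, rfl⟩ :=
      hA ((↑) '' C) (isClubIn_iff_isClub.2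
        ⟨by simp, by rwa [preimage_image_eq _ Subtype.val_injective]⟩)
    exact ⟨x, hxA, hxC⟩
  · obtain ⟨x, hxA, hxC⟩ := hA (isClubIn_iff_isClub.1 hC).2
    exact ⟨x, hxA, hxC⟩

theorem IsClubIn.inter {C D : Set Ordinal.{u}} {δ : Ordinal.{u}} (hδ : δ.cof ≠ ℵ₀)
    (hC : IsClubIn C δ) (hD : IsClubIn D δ) : IsClubIn (C ∩ D) δ := by
  rw [isClubIn_iff_isClub] at hC hD ⊢
  exact ⟨inter_subset_left.trans hC.1, hC.2.inter (by simpa [← lift_cof] using hδ) hD.2⟩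

theorem isStationaryIn_iUnion_iff {ι : Type v} {A : ι → Set Ordinal.{u}} {δ : Ordinal.{u}}
    (hδ : δ.cof ≠ ℵ₀) (hι : Cardinal.lift.{u} #ι < Cardinal.lift.{v} δ.cof) :
    IsStationaryIn (⋃ i, A i) δ ↔ ∃ i, IsStationaryIn (A i) δ := by
  simp only [isStationaryIn_iff_isStationary, preimage_iUnion]
  refine isStationary_iUnion_iff (by simpa [← lift_cof] using hδ) ?_
  rw [← Cardinal.lift_lt.{_, u + 1}] at hι
  simpa [← lift_cof] using hι

theorem IsClubIn.exists_strictMono {C : Set Ordinal.{u}} {δ : Ordinal.{u}}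
    (hδ : Order.IsSuccLimit δ) (hC : IsClubIn C δ) :
    ∃ s : ℕ → Ordinal.{u}, StrictMono s ∧ ∀ n, s n ∈ C := by
  have hnext : ∀ x < δ, ∃ y ∈ C, x < y := fun x hx => by
    obtain ⟨y, hy, hxy⟩ := hC.2.1 _ (hδ.succ_lt hx)
    exact ⟨y, hy, Order.succ_le_iff.1 hxy⟩
  have : Nonempty C := let ⟨y, hy, _⟩ := hnext 0 hδ.bot_lt; ⟨y, hy⟩
  have : NoMaxOrder C := ⟨fun x => let ⟨y, hy, hxy⟩ := hnext x (hC.1 x.2); ⟨⟨y, hy⟩, hxy⟩⟩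
  obtain ⟨s, hs⟩ := Nat.exists_strictMono C
  exact ⟨fun n => s n, hs, fun n => (s n).2⟩

theorem isStationaryIn_setOf_cof_eq_aleph0 {κ : Ordinal.{u}} (hκ : ℵ₀ < κ.cof) :
    IsStationaryIn {α | α < κ ∧ α.cof = ℵ₀} κ := by
  intro C hC
  obtain ⟨s, hs, hsC⟩ := hC.exists_strictMono (one_lt_cof_iff.1 (one_lt_aleph0.trans hκ))
  have hlt_sup (n : ℕ) : s n < ⨆ n, s n := (hs n.lt_succ_self).trans_le (Ordinal.le_iSup s _)
  have hsup : ⨆ n, s n < κ := lift_iSup_lt_of_lt_cof (by simpa) fun n => hC.1 (hsC n)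
  have hcof : (⨆ n, s n).cof = ℵ₀ := by simpa using lift_cof_iSup hs
  have hne : ⨆ n, s n ≠ 0 := (bot_le.trans_lt (hlt_sup 0)).ne'
  refine ⟨⨆ n, s n, ⟨hsup, hcof⟩, hC.2.2 _ hsup hne (sSup_inter_Iio_eq_iff.2 fun x hx => ?_)⟩
  obtain ⟨n, hn⟩ := Ordinal.lt_iSup_iff.1 hx
  exact ⟨s n, hsC n, hn, hlt_sup n⟩

theorem IsClubIn.image_lift {C : Set Ordinal.{u}} {δ : Ordinal.{u}} (hC : IsClubIn C δ) :
    IsClubIn (Ordinal.lift.{v} '' C) (Ordinal.lift.{v} δ) := by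
  obtain ⟨hsub, hunb, hcl⟩ := hC
  refine ⟨?_, fun α hα => ?_, fun α hα hα0 hsup => ?_⟩
  · rintro _ ⟨y, hy, rfl⟩
    exact Ordinal.lift_lt.2 (hsub hy)
  · obtain ⟨a, ha, rfl⟩ := Ordinal.lt_lift_iff.1 hα
    obtain ⟨y, hy, hay⟩ := hunb a ha
    exact ⟨_, mem_image_of_mem _ hy, Ordinal.lift_le.2 hay⟩
  · obtain ⟨a, ha, rfl⟩ := Ordinal.lt_lift_iff.1 hα
    have ha0 : a ≠ 0 := by rintro rfl; exact hα0 Ordinal.lift_zero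
    rw [sSup_inter_Iio_eq_iff] at hsup
    refine mem_image_of_mem _ (hcl a ha ha0 (sSup_inter_Iio_eq_iff.2 fun x hx => ?_))
    obtain ⟨_, ⟨y, hy, rfl⟩, hxy, hya⟩ := hsup _ (Ordinal.lift_lt.2 hx)
    exact ⟨y, hy, Ordinal.lift_lt.1 hxy, Ordinal.lift_lt.1 hya⟩

end Club

section OrderType

theorem OTypeLE.mono {A B : Set Ordinal.{u}} {γ δ : Ordinal.{u}} (h : OTypeLE B γ)
    (hAB : A ⊆ B) (hγδ : γ ≤ δ) : OTypeLE A δ :=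
  h.map fun e => ((Subtype.orderEmbedding hAB).trans e).trans
    (Subtype.orderEmbedding fun _ hx => lt_of_lt_of_le hx hγδ)

theorem OTypeLE.of_subsingleton {A : Set Ordinal.{u}} {γ : Ordinal.{u}} (hA : A.Subsingleton)
    (hγ : 0 < γ) : OTypeLE A γ :=
  have := hA.coe_sort
  ⟨OrderEmbedding.ofMapLEIff (fun _ => ⟨0, hγ⟩) fun a b => by simp [Subsingleton.elim a b]⟩

theorem exists_oTypeLE_of_countable {A : Set Ordinal.{u}} (hA : A.Countable) :
    ∃ γ < (ℵ₁ : Cardinal.{u}).ord, OTypeLE A γ := by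
  have hlt : typeLT A < Ordinal.lift.{u + 1} (ℵ₁ : Cardinal.{u}).ord := by
    rw [lift_ord, lt_ord, card_type]
    simpa using hA.le_aleph0.trans_lt aleph0_lt_aleph_one
  obtain ⟨γ, hγ, hγA⟩ := Ordinal.lt_lift_iff.1 hlt
  rw [← type_lt_Iio, type_eq] at hγA
  exact ⟨γ, hγ, hγA.map fun e => (OrderIso.ofRelIsoLT e).symm.toOrderEmbedding⟩

variable {C : Set Ordinal.{u}} {θ : Ordinal.{u}}

theorem HasOType.exists_lt (hC : HasOType C θ) (hθ : Order.IsSuccPrelimit θ) {x : Ordinal.{u}}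
    (hx : x ∈ C) : ∃ y ∈ C, x < y := by
  obtain ⟨e⟩ := hC
  let i := e.symm ⟨x, hx⟩
  have hi : i < ⟨Order.succ i, hθ.succ_lt i.2⟩ := Order.lt_succ i.1
  exact ⟨_, (e _).2, by simpa only [i, e.apply_symm_apply] using
    Subtype.coe_lt_coe.2 (e.strictMono hi)⟩

theorem HasOType.bddAbove (hC : HasOType C θ) : BddAbove C :=
  have := small_map hC.some.symm.toEquiv
  bddAbove_of_small

theorem HasOType.cof_sSup (hC : HasOType C θ) (hθ : Order.IsSuccPrelimit θ) :
    (sSup C).cof = θ.cof := by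
  obtain ⟨e⟩ := hC
  have hsup : sSup C = ⨆ i, (e i : Ordinal) := by
    rw [iSup, range_comp' Subtype.val, e.range_eq, image_univ, Subtype.range_coe]
  rw [hsup]
  exact cof_iSup_Iio ((Subtype.strictMono_coe _).comp e.strictMono) hθ

theorem HasOType.sSup_lt (hC : HasOType C θ) {κ : Ordinal.{u}} (hθ : θ.card < κ.cof)
    (hCκ : ∀ x ∈ C, x < κ) : sSup C < κ := by
  refine sSup_lt_of_lt_cof ?_ hCκ
  rw [← Cardinal.mk_congr hC.some.toEquiv, ← lift_cof, Cardinal.mk_Iio_ordinal]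
  exact Cardinal.lift_lt.2 hθ

theorem IsClosedSet.isClubIn_sSup (hcl : IsClosedSet C) (hC : HasOType C θ)
    (hθ : Order.IsSuccPrelimit θ) : IsClubIn C (sSup C) := by
  refine ⟨fun x hx => ?_, fun α hα => ?_, hcl⟩
  · obtain ⟨y, hy, hxy⟩ := hC.exists_lt hθ hx
    exact hxy.trans_le (le_csSup hC.bddAbove hy)
  · obtain ⟨y, hy, hαy⟩ := exists_lt_of_lt_csSup' hα
    exact ⟨y, hy, hαy.le⟩

end OrderType

section Guessing

/-- `S` is a sequence as in `(*)`, with `κ` for `ω₂`, any countable set of ordinals for `S_α`, and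
any club of `β` for `c_β`. -/
def IsGuessingSequence (κ : Ordinal.{u}) (S : Ordinal.{u} → Set Ordinal.{u}) : Prop :=
  (∀ α < κ, α.cof = ℵ₀ → (S α).Countable) ∧
    ∀ β < κ, β.cof = ℵ₁ → ∃ c, IsClubIn c β ∧ ∀ α ∈ c, c ∩ Iio α ⊆ S α

theorem StarPrinciple.exists_isGuessingSequence (h : StarPrinciple) :
    ∃ S : Ordinal.{0} → Set Ordinal, IsGuessingSequence (ℵ_ 2).ord S := by
  obtain ⟨S, hcount, hguess⟩ := h
  refine ⟨S, fun α hα hcof => (hcount α hα hcof).2, fun β hβ hcof => ?_⟩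
  obtain ⟨c, hc, -, hcS⟩ := hguess β hβ hcof
  exact ⟨c, hc, hcS⟩

theorem ordinal_lift_injective : Function.Injective Ordinal.lift.{v, u} :=
  fun _ _ => Ordinal.lift_inj.1

variable {κ : Ordinal.{u}} {S : Ordinal.{u} → Set Ordinal.{u}}

theorem IsGuessingSequence.lift (hS : IsGuessingSequence κ S) :
    IsGuessingSequence (Ordinal.lift.{v} κ)
      (Function.extend Ordinal.lift.{v} (fun a => Ordinal.lift.{v} '' S a) fun _ => ∅) := by
  refine ⟨fun α hα hcof => ?_, fun β hβ hcof => ?_⟩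
  · obtain ⟨a, ha, rfl⟩ := Ordinal.lt_lift_iff.1 hα
    rw [ordinal_lift_injective.extend_apply]
    exact (hS.1 a ha (by simpa [← lift_cof] using hcof)).image _
  · obtain ⟨b, hb, rfl⟩ := Ordinal.lt_lift_iff.1 hβ
    obtain ⟨c, hc, hcS⟩ := hS.2 b hb (by simpa [← lift_cof] using hcof)
    refine ⟨_, hc.image_lift, ?_⟩
    rintro _ ⟨y, hy, rfl⟩ _ ⟨⟨z, hz, rfl⟩, hzy⟩
    rw [ordinal_lift_injective.extend_apply]
    exact mem_image_of_mem _ (hcS y hy ⟨hz, Ordinal.lift_lt.1 hzy⟩)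

theorem IsGuessingSequence.exists_isStationaryIn (hS : IsGuessingSequence κ S)
    (hκ : ℵ₁ < κ.cof) :
    ∃ γ < (ℵ₁ : Cardinal.{u}).ord,
      IsStationaryIn {α | (α < κ ∧ α.cof = ℵ₀) ∧ OTypeLE (S α) γ} κ := by
  have hκ₀ : ℵ₀ < κ.cof := aleph0_lt_aleph_one.trans hκ
  have hcover : {α | α < κ ∧ α.cof = ℵ₀} =
      ⋃ γ : Iio (ℵ₁ : Cardinal.{u}).ord, {α | (α < κ ∧ α.cof = ℵ₀) ∧ OTypeLE (S α) γ} := by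
    ext α
    simp only [mem_iUnion, mem_ofPred_eq, exists_and_left, iff_self_and]
    intro hα
    obtain ⟨γ, hγ, hSγ⟩ := exists_oTypeLE_of_countable (hS.1 α hα.1 hα.2)
    exact ⟨⟨γ, hγ⟩, hSγ⟩
  have hstat := isStationaryIn_setOf_cof_eq_aleph0 hκ₀
  rw [hcover, isStationaryIn_iUnion_iff hκ₀.ne' (by simpa [← lift_cof] using hκ)] at hstat
  obtain ⟨⟨γ, hγ⟩, hγstat⟩ := hstat
  exact ⟨γ, hγ, hγstat⟩

end Guessing

section Coloring

open scoped Classical in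
/-- The coloring merging, below each `α`, all of `S α` into the single color `0`; a point `ξ`
outside `S α` keeps the color `e ξ`. -/
noncomputable def mergeColoring (S : Ordinal.{u} → Set Ordinal.{u})
    (e : Ordinal.{u} → Ordinal.{v}) (ξ α : Ordinal.{u}) : Ordinal.{v} :=
  if ξ ∈ S α then 0 else e ξ

variable {S : Ordinal.{u} → Set Ordinal.{u}} {e : Ordinal.{u} → Ordinal.{v}}

theorem mergeColoring_lt {μ : Ordinal.{v}} {ξ α : Ordinal.{u}} (he : e ξ < μ) :
    mergeColoring S e ξ α < μ := by
  unfold mergeColoring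
  split_ifs
  exacts [bot_le.trans_lt he, he]

theorem oTypeLE_setOf_mergeColoring_eq {α η γ : Ordinal.{u}} (he : InjOn e (Iio α))
    (he0 : ∀ ξ < α, e ξ ≠ 0) (hS : OTypeLE (S α) γ) (hη : η < α) :
    OTypeLE {ξ | ξ < α ∧ mergeColoring S e ξ α = mergeColoring S e η α} (γ + 1) := by
  by_cases hηS : η ∈ S α
  · refine hS.mono ?_ (Order.le_succ γ)
    rintro ξ ⟨hξ, hcol⟩
    by_contra hξS
    exact he0 ξ hξ (by simpa [mergeColoring, hηS, hξS] using hcol)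
  · refine .of_subsingleton ?_ (Order.bot_lt_succ γ)
    suffices key : ∀ ξ < α, mergeColoring S e ξ α = mergeColoring S e η α → ξ = η from
      fun ξ hξ ζ hζ => (key ξ hξ.1 hξ.2).trans (key ζ hζ.1 hζ.2).symm
    intro ξ hξ hcol
    by_cases hξS : ξ ∈ S α
    · exact absurd (by simpa [mergeColoring, hηS, hξS] using hcol.symm) (he0 η hη)
    · exact he hξ hη (by simpa [mergeColoring, hηS, hξS] using hcol)

theorem IsGuessingSequence.not_isRainbow_mergeColoring {κ β : Ordinal.{u}} {C : Set Ordinal.{u}}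
    (hS : IsGuessingSequence κ S) (hβ : β < κ) (hcof : β.cof = ℵ₁) (hC : IsClubIn C β) :
    ¬ IsRainbow (mergeColoring S e) C := by
  intro hrain
  obtain ⟨c, hc, hcS⟩ := hS.2 β hβ hcof
  have hcof₀ : ℵ₀ < β.cof := hcof ▸ aleph0_lt_aleph_one
  obtain ⟨s, hs, hsCc⟩ := (hC.inter hcof₀.ne' hc).exists_strictMono
    (one_lt_cof_iff.1 (one_lt_aleph0.trans hcof₀))
  have h01 : s 0 < s 1 := hs Nat.zero_lt_one
  have h12 : s 1 < s 2 := hs Nat.one_lt_two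
  have h02 : s 0 < s 2 := h01.trans h12
  have hmem₀ : s 0 ∈ S (s 2) := hcS _ (hsCc 2).2 ⟨(hsCc 0).2, h02⟩
  have hmem₁ : s 1 ∈ S (s 2) := hcS _ (hsCc 2).2 ⟨(hsCc 1).2, h12⟩
  exact h01.ne (hrain _ (hsCc 0).1 _ (hsCc 2).1 _ (hsCc 1).1 _ (hsCc 2).1 h02 h12
    (by simp [mergeColoring, hmem₀, hmem₁])).1

theorem exists_injOn_mapsTo_Iio_lift {κ : Ordinal.{w}} (hκ : Order.IsSuccPrelimit κ) :
    ∃ e : Ordinal.{max w u} → Ordinal.{max w v}, InjOn e (Iio (Ordinal.lift.{u} κ)) ∧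
      MapsTo e (Iio (Ordinal.lift.{u} κ)) (Ioo 0 (Ordinal.lift.{v} κ)) := by
  refine ⟨Function.extend Ordinal.lift.{u} (fun a => Ordinal.lift.{v} (Order.succ a)) 0, ?_, ?_⟩
  · intro α hα β hβ hαβ
    obtain ⟨a, -, rfl⟩ := Ordinal.lt_lift_iff.1 hα
    obtain ⟨b, -, rfl⟩ := Ordinal.lt_lift_iff.1 hβ
    rw [ordinal_lift_injective.extend_apply, ordinal_lift_injective.extend_apply] at hαβ
    simpa using hαβ
  · intro α hα
    obtain ⟨a, ha, rfl⟩ := Ordinal.lt_lift_iff.1 hα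
    rw [ordinal_lift_injective.extend_apply]
    exact ⟨by simp, Ordinal.lift_lt.2 (hκ.succ_lt ha)⟩

end Coloring

theorem cof_ord_aleph_two : (ℵ_ 2 : Cardinal.{u}).ord.cof = ℵ_ 2 := by
  simpa [one_add_one_eq_two] using (isRegular_aleph_add_one 1).cof_ord

theorem stmt11_general {κ : Ordinal.{w}} {S₀ : Ordinal.{w} → Set Ordinal.{w}}
    (hκ : ℵ₁ < κ.cof) (hS₀ : IsGuessingSequence κ S₀) :
    ∃ S : Set Ordinal.{max w u}, ∃ γ : Ordinal.{max w u},
      ∃ f : Ordinal.{max w u} → Ordinal.{max w u} → Ordinal.{max w v},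
      S ⊆ {α | α < Ordinal.lift.{u} κ ∧ α.cof = ℵ₀} ∧
      IsStationaryIn S (Ordinal.lift.{u} κ) ∧
      γ < (ℵ₁ : Cardinal.{max w u}).ord ∧
      (∀ α β, α < β → β < Ordinal.lift.{u} κ → f α β < Ordinal.lift.{v} κ) ∧
      (∀ α ∈ S, ∀ η < α, OTypeLE {ξ | ξ < α ∧ f ξ α = f η α} γ) ∧
      ∀ C ⊆ S, IsClosedSet C → HasOType C (ℵ₁ : Cardinal.{max w u}).ord → ¬ IsRainbow f C := by
  have hκ' : ℵ₁ < (Ordinal.lift.{u} κ).cof := by simpa [← lift_cof] using hκ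
  have hlim : Order.IsSuccLimit κ :=
    one_lt_cof_iff.1 (one_lt_aleph0.trans (aleph0_lt_aleph_one.trans hκ))
  have hlim₁ : Order.IsSuccLimit (ℵ₁ : Cardinal.{max w u}).ord :=
    isSuccLimit_ord aleph0_lt_aleph_one.le
  obtain ⟨S, hS⟩ : ∃ S, IsGuessingSequence (Ordinal.lift.{u} κ) S := ⟨_, hS₀.lift⟩
  obtain ⟨γ, hγ, hstat⟩ := hS.exists_isStationaryIn hκ'
  obtain ⟨e, heinj, hemaps⟩ := exists_injOn_mapsTo_Iio_lift.{u, v, w} hlim.isSuccPrelimit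
  refine ⟨_, Order.succ γ, mergeColoring S e, fun α hα => hα.1, hstat, hlim₁.succ_lt hγ,
    fun α β hαβ hβ => mergeColoring_lt (hemaps (hαβ.trans hβ)).2,
    fun α hα η hη => ?_, fun C hCS hcl hC => ?_⟩
  · have hsub : Iio α ⊆ Iio (Ordinal.lift.{u} κ) := Iio_subset_Iio hα.1.1.le
    exact oTypeLE_setOf_mergeColoring_eq (heinj.mono hsub) (fun ξ hξ => (hemaps (hsub hξ)).1.ne')
      hα.2 hη
  · exact hS.not_isRainbow_mergeColoring
      (hC.sSup_lt (by simpa using hκ') fun x hx => (hCS hx).1.1)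
      (by rw [hC.cof_sSup hlim₁.isSuccPrelimit, isRegular_aleph_one.cof_ord])
      (hcl.isClubIn_sSup hC hlim₁.isSuccPrelimit)

/-- Remark (star): `(*)` yields a stationary `S ⊆ S^{ω₂}_ω`, an ordinal `γ < ω₁` and a
coloring `f : [ω₂]² → ω₂` whose color classes `t_{ηα}` for `α ∈ S` all have order type
at most `γ`, yet no closed subset of `S` of order type `ω₁` is `f`-rainbow. -/
theorem stmt11 (hstar : StarPrinciple) :
    ∃ S : Set Ordinal, ∃ γ : Ordinal, ∃ f : Ordinal → Ordinal → Ordinal,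
      S ⊆ {α : Ordinal | α < (Cardinal.aleph 2).ord ∧ α.cof = ℵ₀} ∧
      IsStationaryIn S (Cardinal.aleph 2).ord ∧
      γ < (Cardinal.aleph 1).ord ∧
      (∀ α β : Ordinal, α < β → β < (Cardinal.aleph 2).ord → f α β < (Cardinal.aleph 2).ord) ∧
      (∀ α ∈ S, ∀ η : Ordinal, η < α →
        OTypeLE {ξ : Ordinal | ξ < α ∧ f ξ α = f η α} γ) ∧
      ∀ C : Set Ordinal, C ⊆ S → IsClosedSet C →
        HasOType C (Cardinal.aleph 1).ord → ¬ IsRainbow f C := by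
  obtain ⟨S₀, hS₀⟩ := hstar.exists_isGuessingSequence
  simpa using stmt11_general (by rw [cof_ord_aleph_two]; exact aleph_lt_aleph.2 one_lt_two) hS₀
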